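/- arXiv:1706.07880 — 2 statements merged into one kernel-verified Lean document; each statement's English description precedes it below -/
import Mathlib

section
/- (Neighborhood of optimality for CDSGD with fixed step size.) Under the hypotheses of Theorem 1 (filtration, update X_{k+1} = X_k − α·G_k, V Ĥ-strongly convex and γ̂-smooth with Ĥ ≤ γ̂, minimizer value V*, conditional bounds ⟨∇V(X_k), E[G_k | ℱ_k]⟩ ≥ ζ₁‖∇V(X_k)‖² and E[‖G_k‖² | ℱ_k] ≤ Q + Q_m‖∇V(X_k)‖² with ζ₁ > 0, Q ≥ 0, Q_m ≥ ζ₁², and 0 < α ≤ ζ₁/(γ̂·Q_m)), the sequence of expected Lyapunov gaps satisfies limsup_{k→∞} E[V(X_k) − V*] ≤ α·γ̂·Q/(2·Ĥ·ζ₁). -/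
open MeasureTheory Filter
open scoped RealInnerProductSpace BigOperators

/-!
By the descent lemma, one step `X ↦ X - α • G` changes the expected objective by at most
`-α 𝔼⟪∇V X, G⟫ + (γ / 2) α² 𝔼‖G‖²`. Conditioning on the past turns the moment bounds on `G` into
bounds by the mean squared gradient `g = 𝔼‖∇V X‖²`, so this change is at most
`-α ζ g + (γ / 2) α² (Q + Qm g)`, and the step size condition lets half of the first term
absorb the one with `Qm`. Strong convexity gives the Polyak–Łojasiewicz inequality
`2 H (V x - V xstar) ≤ ‖∇V x‖²`, which bounds `g` from below by the expected gap; the gap therefore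
contracts towards `C = α γ Q / (2 H ζ)` with ratio `1 - α ζ H`.
-/

section Smooth

open scoped NNReal

theorem norm_add_sub_sub_fderiv_le {E F : Type*} [NormedAddCommGroup E] [NormedSpace ℝ E]
    [NormedAddCommGroup F] [NormedSpace ℝ F] {f : E → F} {K : ℝ≥0} (hf : Differentiable ℝ f)
    (hLip : LipschitzWith K (fderiv ℝ f)) (x d : E) :
    ‖f (x + d) - f x - fderiv ℝ f x d‖ ≤ K / 2 * ‖d‖ ^ 2 := by
  let remainder : ℝ → F := fun t => f (x + t • d) - f x - t • fderiv ℝ f x d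
  have hasDerivAt_remainder (t : ℝ) :
      HasDerivAt remainder (fderiv ℝ f (x + t • d) d - fderiv ℝ f x d) t := by
    have hline : HasDerivAt (fun t : ℝ => x + t • d) d t := by
      simpa using ((hasDerivAt_id t).smul_const d).const_add x
    have hlinear : HasDerivAt (fun t : ℝ => t • fderiv ℝ f x d) (fderiv ℝ f x d) t := by
      simpa using (hasDerivAt_id t).smul_const (fderiv ℝ f x d)
    exact (((hf _).hasFDerivAt.comp_hasDerivAt t hline).sub_const (f x)).sub hlinear
  have hasDerivAt_bound (t : ℝ) :
      HasDerivAt (fun t => K / 2 * ‖d‖ ^ 2 * t ^ 2) (K * t * ‖d‖ ^ 2) t :=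
    ((hasDerivAt_pow 2 t).const_mul _).congr_deriv (by push_cast; ring)
  have norm_deriv_le (t : ℝ) (ht : 0 ≤ t) :
      ‖fderiv ℝ f (x + t • d) d - fderiv ℝ f x d‖ ≤ K * t * ‖d‖ ^ 2 :=
    calc ‖fderiv ℝ f (x + t • d) d - fderiv ℝ f x d‖
        ≤ ‖fderiv ℝ f (x + t • d) - fderiv ℝ f x‖ * ‖d‖ :=
          (fderiv ℝ f (x + t • d) - fderiv ℝ f x).le_opNorm d
      _ ≤ K * ‖x + t • d - x‖ * ‖d‖ := by gcongr; exact hLip.norm_sub_le _ _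
      _ = K * t * ‖d‖ ^ 2 := by
          rw [add_sub_cancel_left, norm_smul, Real.norm_of_nonneg ht]; ring
  simpa [remainder] using image_norm_le_of_norm_deriv_right_le_deriv_boundary
    (fun t _ => (hasDerivAt_remainder t).continuousAt.continuousWithinAt)
    (fun t _ => (hasDerivAt_remainder t).hasDerivWithinAt) (by simp [remainder])
    hasDerivAt_bound (fun t ht => norm_deriv_le t ht.1) (Set.right_mem_Icc.2 zero_le_one)

variable {E : Type*} [NormedAddCommGroup E] [InnerProductSpace ℝ E] {V : E → ℝ}

theorem polyak_lojasiewicz_of_strongly_convex {H : ℝ} {x y g : E} (hH : 0 ≤ H)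
    (h : V x + ⟪g, y - x⟫ + H / 2 * ‖y - x‖ ^ 2 ≤ V y) :
    2 * H * (V x - V y) ≤ ‖g‖ ^ 2 :=
  calc 2 * H * (V x - V y)
      ≤ 2 * H * (-⟪g, y - x⟫ - H / 2 * ‖y - x‖ ^ 2) :=
        mul_le_mul_of_nonneg_left (by linarith) (by positivity)
    _ = ‖g‖ ^ 2 - ‖g + H • (y - x)‖ ^ 2 := by
        rw [norm_add_sq_real, real_inner_smul_right, norm_smul, mul_pow, Real.norm_eq_abs, sq_abs]
        ring
    _ ≤ ‖g‖ ^ 2 := sub_le_self _ (sq_nonneg _)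

variable [CompleteSpace E] {K : ℝ≥0}

theorem abs_add_sub_sub_inner_gradient_le (hV : Differentiable ℝ V)
    (hLip : LipschitzWith K (gradient V)) (x d : E) :
    |V (x + d) - V x - ⟪gradient V x, d⟫| ≤ K / 2 * ‖d‖ ^ 2 := by
  have hLip' : LipschitzWith K (fderiv ℝ V) := by
    simpa using (InnerProductSpace.toDual ℝ E).lipschitz.comp hLip
  simpa only [inner_gradient_left, Real.norm_eq_abs] using
    norm_add_sub_sub_fderiv_le hV hLip' x d

end Smooth

section SquareIntegrable

open scoped NNReal ENNReal

variable {Ω : Type*} {m0 : MeasurableSpace Ω} {P : Measure Ω}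

theorem memLp_comp_of_lipschitzWith [IsFiniteMeasure P] {E F : Type*} [NormedAddCommGroup E]
    [NormedAddCommGroup F] {p : ℝ≥0∞} {f : E → F} {K : ℝ≥0} {X : Ω → E} (hf : LipschitzWith K f)
    (hX : MemLp X p P) : MemLp (fun ω => f (X ω)) p P := by
  have hcentered : LipschitzWith K (fun x => f x - f 0) := by
    simpa using hf.sub (LipschitzWith.const (f 0))
  simpa [Function.comp_def, Pi.add_def] using
    (hcentered.comp_memLp (sub_self _) hX).add (memLp_const (f 0))

theorem memLp_of_succ_eq_sub_smul {E : Type*} [NormedAddCommGroup E] [NormedSpace ℝ E]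
    {p : ℝ≥0∞} {X G : ℕ → Ω → E} {α : ℝ} {n : ℕ} (hX : MemLp (X n) p P)
    (hG : ∀ k, n ≤ k → MemLp (G k) p P)
    (hupdate : ∀ k, n ≤ k → ∀ ω, X (k + 1) ω = X k ω - α • G k ω) (k : ℕ) (hk : n ≤ k) :
    MemLp (X k) p P := by
  induction k, hk using Nat.le_induction with
  | base => exact hX
  | succ k hk ih =>
    rw [show X (k + 1) = X k - α • G k from funext (hupdate k hk)]
    exact ih.sub ((hG k hk).const_smul α)

variable {E : Type*} [NormedAddCommGroup E] [InnerProductSpace ℝ E]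

theorem integrable_inner_of_memLp_two {Y G : Ω → E} (hY : MemLp Y 2 P) (hG : MemLp G 2 P) :
    Integrable (fun ω => ⟪Y ω, G ω⟫) P :=
  memLp_one_iff_integrable.1 ((innerSL ℝ).memLp_of_bilin 1 hY hG)

variable [CompleteSpace E] [IsFiniteMeasure P]

theorem integral_inner_condExp {m : MeasurableSpace Ω} (hm : m ≤ m0) {Y G : Ω → E}
    (hYm : StronglyMeasurable[m] Y) (hY : MemLp Y 2 P) (hG : MemLp G 2 P) :
    ∫ ω, ⟪Y ω, (P[G | m]) ω⟫ ∂P = ∫ ω, ⟪Y ω, G ω⟫ ∂P := by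
  have hpull : P[fun ω => ⟪Y ω, G ω⟫ | m] =ᵐ[P] fun ω => ⟪Y ω, (P[G | m]) ω⟫ :=
    condExp_bilin_of_stronglyMeasurable_left (innerSL ℝ) hYm
      (integrable_inner_of_memLp_two hY hG) (hG.integrable one_le_two)
  rw [← integral_congr_ae hpull, integral_condExp hm]

theorem mul_integral_norm_sq_le_integral_inner {m : MeasurableSpace Ω} (hm : m ≤ m0)
    {Y G : Ω → E} {ζ : ℝ} (hYm : StronglyMeasurable[m] Y) (hY : MemLp Y 2 P) (hG : MemLp G 2 P)
    (h : ∀ᵐ ω ∂P, ζ * ‖Y ω‖ ^ 2 ≤ ⟪Y ω, (P[G | m]) ω⟫) :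
    ζ * ∫ ω, ‖Y ω‖ ^ 2 ∂P ≤ ∫ ω, ⟪Y ω, G ω⟫ ∂P := by
  rw [← integral_inner_condExp hm hYm hY hG, ← integral_const_mul]
  exact integral_mono_ae ((hY.integrable_norm_pow two_ne_zero).const_mul ζ)
    (integrable_inner_of_memLp_two hY (hG.condExp one_le_two)) h

variable {V : E → ℝ} {K : ℝ≥0} {X G : Ω → E}

theorem integrable_comp_of_lipschitzWith_gradient (hV : Differentiable ℝ V)
    (hLip : LipschitzWith K (gradient V)) (hX : MemLp X 2 P) :
    Integrable (fun ω => V (X ω)) P := by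
  have hlinear : Integrable (fun ω => V 0 + ⟪gradient V 0, X ω⟫) P :=
    (integrable_const _).add ((hX.integrable one_le_two).const_inner _)
  have hremainder : Integrable (fun ω => V (X ω) - (V 0 + ⟪gradient V 0, X ω⟫)) P := by
    refine ((hX.integrable_norm_pow two_ne_zero).const_mul (K / 2 : ℝ)).mono'
      ((hV.continuous.comp_aestronglyMeasurable hX.1).sub hlinear.1) (ae_of_all _ fun ω => ?_)
    simpa [sub_sub] using abs_add_sub_sub_inner_gradient_le hV hLip 0 (X ω)
  exact (hremainder.add hlinear).congr (ae_of_all _ fun ω => sub_add_cancel _ _)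

theorem integral_comp_sub_smul_le (hV : Differentiable ℝ V) (hLip : LipschitzWith K (gradient V))
    (hX : MemLp X 2 P) (hG : MemLp G 2 P) (α : ℝ) :
    ∫ ω, V (X ω - α • G ω) ∂P ≤ ∫ ω, V (X ω) ∂P
      - α * ∫ ω, ⟪gradient V (X ω), G ω⟫ ∂P + K / 2 * α ^ 2 * ∫ ω, ‖G ω‖ ^ 2 ∂P := by
  have hVX := integrable_comp_of_lipschitzWith_gradient hV hLip hX
  have hinner := (integrable_inner_of_memLp_two
    (memLp_comp_of_lipschitzWith hLip hX) hG).const_mul α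
  have hsq := (hG.integrable_norm_pow two_ne_zero).const_mul (K / 2 * α ^ 2 : ℝ)
  have hdescent (ω : Ω) : V (X ω - α • G ω) ≤
      V (X ω) - α * ⟪gradient V (X ω), G ω⟫ + K / 2 * α ^ 2 * ‖G ω‖ ^ 2 := by
    have h := (abs_le.1 (abs_add_sub_sub_inner_gradient_le hV hLip (X ω) (-(α • G ω)))).2
    rw [← sub_eq_add_neg, inner_neg_right, real_inner_smul_right, norm_neg, norm_smul, mul_pow,
      Real.norm_eq_abs, sq_abs] at h
    linarith
  calc ∫ ω, V (X ω - α • G ω) ∂P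
      ≤ ∫ ω, (V (X ω) - α * ⟪gradient V (X ω), G ω⟫ + K / 2 * α ^ 2 * ‖G ω‖ ^ 2) ∂P :=
        integral_mono (integrable_comp_of_lipschitzWith_gradient hV hLip
          (hX.sub (hG.const_smul α))) ((hVX.sub hinner).add hsq) hdescent
    _ = _ := by
        rw [integral_add (f := fun ω => V (X ω) - α * ⟪gradient V (X ω), G ω⟫) (hVX.sub hinner) hsq,
          integral_sub hVX hinner, integral_const_mul, integral_const_mul]

end SquareIntegrable

section Contraction

open scoped NNReal

theorem integral_le_add_mul_integral_of_condExp_le {Ω : Type*} {m m0 : MeasurableSpace Ω}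
    {P : Measure Ω} [IsProbabilityMeasure P] (hm : m ≤ m0) {f g : Ω → ℝ} {a b : ℝ}
    (hg : Integrable g P) (h : ∀ᵐ ω ∂P, (P[f | m]) ω ≤ a + b * g ω) :
    ∫ ω, f ω ∂P ≤ a + b * ∫ ω, g ω ∂P :=
  calc ∫ ω, f ω ∂P = ∫ ω, (P[f | m]) ω ∂P := (integral_condExp hm).symm
    _ ≤ ∫ ω, (a + b * g ω) ∂P :=
      integral_mono_ae integrable_condExp ((integrable_const a).add (hg.const_mul b)) h
    _ = a + b * ∫ ω, g ω ∂P := by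
      rw [integral_add (integrable_const a) (hg.const_mul b), integral_const_mul]
      simp

theorem limsup_le_of_eventually_sub_le_mul_sub {e : ℕ → ℝ} {ρ C : ℝ}
    (he : BddBelow (Set.range e)) (hρ0 : 0 ≤ ρ) (hρ1 : ρ < 1)
    (hstep : ∀ᶠ k in atTop, e (k + 1) - C ≤ ρ * (e k - C)) : limsup e atTop ≤ C := by
  obtain ⟨n, hn⟩ := eventually_atTop.1 hstep
  have hgeom (k : ℕ) : e (k + n) ≤ C + ρ ^ k * (e n - C) := by
    have h := le_geom (u := fun k => e (k + n) - C) hρ0 k fun j _ => by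
      simpa only [Nat.add_right_comm] using hn (j + n) (Nat.le_add_left n j)
    simp only [zero_add] at h
    linarith
  have hlim : Tendsto (fun k => C + ρ ^ k * (e n - C)) atTop (nhds C) := by
    simpa using ((tendsto_pow_atTop_nhds_zero_of_lt_one hρ0 hρ1).mul_const (e n - C)).const_add C
  rw [← limsup_nat_add e n, ← hlim.limsup_eq]
  exact limsup_le_limsup (Eventually.of_forall hgeom)
    (he.mono (Set.range_comp_subset_range (· + n) e)).isBoundedUnder_of_range.isCoboundedUnder_le
    hlim.isBoundedUnder_le

variable {E : Type*} [NormedAddCommGroup E] [InnerProductSpace ℝ E] [CompleteSpace E]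
  {Ω : Type*} {m0 : MeasurableSpace Ω} {P : Measure Ω} [IsProbabilityMeasure P]
  {V : E → ℝ} {K : ℝ≥0}

section OneStep

variable {m : MeasurableSpace Ω} {X G : Ω → E} {α ζ Q Qm : ℝ}

theorem integral_comp_sub_smul_le_of_moment_bounds (hm : m ≤ m0) (hV : Differentiable ℝ V)
    (hLip : LipschitzWith K (gradient V)) (hα : 0 ≤ α) (hαK : α * (K * Qm) ≤ ζ)
    (hXm : StronglyMeasurable[m] X) (hX : MemLp X 2 P) (hG : MemLp G 2 P)
    (hfirst : ∀ᵐ ω ∂P, ζ * ‖gradient V (X ω)‖ ^ 2 ≤ ⟪gradient V (X ω), (P[G | m]) ω⟫)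
    (hsecond : ∀ᵐ ω ∂P, (P[fun ω' => ‖G ω'‖ ^ 2 | m]) ω ≤ Q + Qm * ‖gradient V (X ω)‖ ^ 2) :
    ∫ ω, V (X ω - α • G ω) ∂P ≤ ∫ ω, V (X ω) ∂P
      - α * ζ / 2 * ∫ ω, ‖gradient V (X ω)‖ ^ 2 ∂P + K / 2 * α ^ 2 * Q := by
  have hgrad : MemLp (fun ω => gradient V (X ω)) 2 P := memLp_comp_of_lipschitzWith hLip hX
  have hinner := mul_integral_norm_sq_le_integral_inner hm
    (hLip.continuous.comp_stronglyMeasurable hXm) hgrad hG hfirst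
  have hnormsq := integral_le_add_mul_integral_of_condExp_le hm
    (hgrad.integrable_norm_pow two_ne_zero) hsecond
  have hdescent := integral_comp_sub_smul_le hV hLip hX hG α
  have hg : 0 ≤ ∫ ω, ‖gradient V (X ω)‖ ^ 2 ∂P := integral_nonneg fun ω => sq_nonneg _
  generalize ∫ ω, ‖gradient V (X ω)‖ ^ 2 ∂P = g at hinner hnormsq hg ⊢
  calc ∫ ω, V (X ω - α • G ω) ∂P
      ≤ ∫ ω, V (X ω) ∂P - α * (ζ * g) + K / 2 * α ^ 2 * (Q + Qm * g) :=
        hdescent.trans (by gcongr)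
    _ = ∫ ω, V (X ω) ∂P - α * ζ * g + α / 2 * (α * (K * Qm)) * g + K / 2 * α ^ 2 * Q := by ring
    _ ≤ ∫ ω, V (X ω) ∂P - α * ζ * g + α / 2 * ζ * g + K / 2 * α ^ 2 * Q := by gcongr
    _ = ∫ ω, V (X ω) ∂P - α * ζ / 2 * g + K / 2 * α ^ 2 * Q := by ring

theorem integral_gap_sub_smul_le {xstar : E} {H : ℝ} (hm : m ≤ m0) (hV : Differentiable ℝ V)
    (hLip : LipschitzWith K (gradient V))
    (hPL : ∀ x, 2 * H * (V x - V xstar) ≤ ‖gradient V x‖ ^ 2)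
    (hH : H ≠ 0) (hζ : 0 < ζ) (hα : 0 ≤ α) (hαK : α * (K * Qm) ≤ ζ)
    (hXm : StronglyMeasurable[m] X) (hX : MemLp X 2 P) (hG : MemLp G 2 P)
    (hfirst : ∀ᵐ ω ∂P, ζ * ‖gradient V (X ω)‖ ^ 2 ≤ ⟪gradient V (X ω), (P[G | m]) ω⟫)
    (hsecond : ∀ᵐ ω ∂P, (P[fun ω' => ‖G ω'‖ ^ 2 | m]) ω ≤ Q + Qm * ‖gradient V (X ω)‖ ^ 2) :
    ∫ ω, (V (X ω - α • G ω) - V xstar) ∂P - α * K * Q / (2 * H * ζ) ≤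
      (1 - α * ζ * H) * (∫ ω, (V (X ω) - V xstar) ∂P - α * K * Q / (2 * H * ζ)) := by
  have hVint {Y : Ω → E} (hY : MemLp Y 2 P) : Integrable (fun ω => V (Y ω)) P :=
    integrable_comp_of_lipschitzWith_gradient hV hLip hY
  have hgap {Y : Ω → E} (hY : MemLp Y 2 P) :
      ∫ ω, (V (Y ω) - V xstar) ∂P = ∫ ω, V (Y ω) ∂P - V xstar := by
    rw [integral_sub (hVint hY) (integrable_const _), integral_const, probReal_univ, one_smul]
  have hPLint : 2 * H * ∫ ω, (V (X ω) - V xstar) ∂P ≤ ∫ ω, ‖gradient V (X ω)‖ ^ 2 ∂P := by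
    rw [← integral_const_mul]
    exact integral_mono (((hVint hX).sub (integrable_const _)).const_mul _)
      ((memLp_comp_of_lipschitzWith hLip hX).integrable_norm_pow two_ne_zero) fun ω => hPL (X ω)
  have hdecrease := integral_comp_sub_smul_le_of_moment_bounds hm hV hLip hα hαK hXm hX hG
    hfirst hsecond
  have hfixed : K / 2 * α ^ 2 * Q = α * ζ * H * (α * K * Q / (2 * H * ζ)) := by field_simp
  rw [hfixed] at hdecrease
  generalize α * K * Q / (2 * H * ζ) = C at hdecrease ⊢
  calc ∫ ω, (V (X ω - α • G ω) - V xstar) ∂P - C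
      = ∫ ω, V (X ω - α • G ω) ∂P - V xstar - C :=
        congrArg (· - C) (hgap (hX.sub (hG.const_smul α)))
    _ ≤ ∫ ω, (V (X ω) - V xstar) ∂P - α * ζ / 2 * ∫ ω, ‖gradient V (X ω)‖ ^ 2 ∂P
        + α * ζ * H * C - C := by linarith only [hdecrease, hgap hX]
    _ ≤ ∫ ω, (V (X ω) - V xstar) ∂P - α * ζ / 2 * (2 * H * ∫ ω, (V (X ω) - V xstar) ∂P)
        + α * ζ * H * C - C := by gcongr
    _ = (1 - α * ζ * H) * (∫ ω, (V (X ω) - V xstar) ∂P - C) := by ring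

end OneStep

theorem cdsgd_fixed_step_neighborhood_of_optimality_general (ℱ : Filtration ℕ m0) {H : ℝ}
    (hH : 0 < H) (hHK : H ≤ K) (hV : Differentiable ℝ V) (hLip : LipschitzWith K (gradient V))
    {xstar : E} (hmin : ∀ x, V xstar ≤ V x)
    (hPL : ∀ x, 2 * H * (V x - V xstar) ≤ ‖gradient V x‖ ^ 2)
    {X G : ℕ → Ω → E} {α ζ Q Qm : ℝ} (hζ : 0 < ζ) (hQm : ζ ^ 2 ≤ Qm)
    (hα : 0 < α) (hαle : α ≤ ζ / (K * Qm))
    (hX1 : MemLp (X 1) 2 P) (hXm : ∀ k, 1 ≤ k → StronglyMeasurable[ℱ k] (X k))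
    (hG : ∀ k, 1 ≤ k → MemLp (G k) 2 P)
    (hupdate : ∀ k, 1 ≤ k → ∀ ω, X (k + 1) ω = X k ω - α • G k ω)
    (hfirst : ∀ k, 1 ≤ k → ∀ᵐ ω ∂P,
      ζ * ‖gradient V (X k ω)‖ ^ 2 ≤ ⟪gradient V (X k ω), (P[G k | ℱ k]) ω⟫)
    (hsecond : ∀ k, 1 ≤ k → ∀ᵐ ω ∂P,
      (P[fun ω' => ‖G k ω'‖ ^ 2 | ℱ k]) ω ≤ Q + Qm * ‖gradient V (X k ω)‖ ^ 2) :
    limsup (fun k => ∫ ω, (V (X k ω) - V xstar) ∂P) atTop ≤ α * K * Q / (2 * H * ζ) := by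
  have hK : (0 : ℝ) < K := hH.trans_le hHK
  have hαK : α * (K * Qm) ≤ ζ :=
    (le_div_iff₀ (mul_pos hK ((pow_pos hζ 2).trans_le hQm))).1 hαle
  have hrate : α * ζ * H ≤ 1 := le_of_mul_le_mul_right
    (calc α * ζ * H * ζ = α * (H * ζ ^ 2) := by ring
      _ ≤ α * (K * Qm) := by gcongr
      _ ≤ 1 * ζ := hαK.trans_eq (one_mul ζ).symm) hζ
  have hbdd : BddBelow (Set.range fun k => ∫ ω, (V (X k ω) - V xstar) ∂P) :=
    ⟨0, Set.forall_mem_range.2 fun k => integral_nonneg fun ω => sub_nonneg.2 (hmin (X k ω))⟩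
  refine limsup_le_of_eventually_sub_le_mul_sub hbdd (sub_nonneg.2 hrate)
    (sub_lt_self 1 (by positivity)) ((eventually_ge_atTop 1).mono fun k hk => ?_)
  simpa only [hupdate k hk] using integral_gap_sub_smul_le (ℱ.le k) hV hLip hPL hH.ne' hζ hα.le hαK
    (hXm k hk) (memLp_of_succ_eq_sub_smul hX1 hG hupdate k hk) (hG k hk) (hfirst k hk)
    (hsecond k hk)

end Contraction

/-- Neighborhood of optimality for CDSGD with fixed step size:
`limsup_{k→∞} E[V(X_k) − V*] ≤ α·γ̂·Q/(2·Ĥ·ζ₁)`. -/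
theorem cdsgd_fixed_step_neighborhood_of_optimality {N : ℕ} {Ω : Type*} {m0 : MeasurableSpace Ω}
    (P : Measure Ω) [IsProbabilityMeasure P] (ℱ : Filtration ℕ m0)
    (V : EuclideanSpace ℝ (Fin N) → ℝ) (Hh γh : ℝ)
    (hHh : 0 < Hh) (hHγ : Hh ≤ γh)
    (hdiff : Differentiable ℝ V)
    (hsc : ∀ x y : EuclideanSpace ℝ (Fin N),
      V y ≥ V x + ⟪gradient V x, y - x⟫ + (Hh / 2) * ‖y - x‖ ^ 2)
    (hLip : LipschitzWith γh.toNNReal (gradient V))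
    (xstar : EuclideanSpace ℝ (Fin N)) (hmin : ∀ x, V xstar ≤ V x)
    (x₁ : EuclideanSpace ℝ (Fin N))
    (X G : ℕ → Ω → EuclideanSpace ℝ (Fin N))
    (α ζ₁ Q Qm : ℝ) (hζ₁ : 0 < ζ₁) (hQ : 0 ≤ Q) (hQm : ζ₁ ^ 2 ≤ Qm)
    (hα : 0 < α) (hαle : α ≤ ζ₁ / (γh * Qm))
    (hX1 : ∀ᵐ ω ∂P, X 1 ω = x₁)
    (hXmeas : ∀ k, StronglyMeasurable[ℱ k] (X k))
    (hGmeas : ∀ k, StronglyMeasurable[ℱ (k + 1)] (G k))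
    (hGint : ∀ k, Integrable (fun ω => ‖G k ω‖ ^ 2) P)
    (hupdate : ∀ k, 1 ≤ k → ∀ ω, X (k + 1) ω = X k ω - α • G k ω)
    (hinner : ∀ k, 1 ≤ k → ∀ᵐ ω ∂P,
      ζ₁ * ‖gradient V (X k ω)‖ ^ 2 ≤ ⟪gradient V (X k ω), (P[G k|ℱ k]) ω⟫)
    (hsecond : ∀ k, 1 ≤ k → ∀ᵐ ω ∂P,
      (P[(fun ω' => ‖G k ω'‖ ^ 2)|ℱ k]) ω ≤ Q + Qm * ‖gradient V (X k ω)‖ ^ 2) :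
    Filter.limsup (fun k => ∫ ω, (V (X k ω) - V xstar) ∂P) atTop ≤
      α * γh * Q / (2 * Hh * ζ₁) := by
  lift γh to NNReal using hHh.le.trans hHγ
  rw [Real.toNNReal_coe] at hLip
  have hX1' : MemLp (X 1) 2 P := (memLp_const x₁).ae_eq (hX1.mono fun _ => Eq.symm)
  have hG (k : ℕ) : MemLp (G k) 2 P := (memLp_two_iff_integrable_sq_norm
    ((hGmeas k).mono (ℱ.le (k + 1))).aestronglyMeasurable).2 (hGint k)
  exact cdsgd_fixed_step_neighborhood_of_optimality_general ℱ hHh hHγ hdiff hLip hmin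
    (fun x => polyak_lojasiewicz_of_strongly_convex hHh.le (hsc x xstar)) hζ₁ hQm hα hαle hX1'
    (fun k _ => hXmeas k) (fun k _ => hG k) hupdate hinner hsecond
end

section
/- (Proposition 2: consensus with diminishing step size.) Let Π be a real symmetric N×N doubly stochastic matrix (Π1 = 1, nonnegative entries) with I ⪰ Π ≻ 0 and with eigenvalues 1 = λ₁(Π) > λ₂(Π) ≥ … ≥ λ_N(Π) > 0. Let (Ω, ℱ, P) be a probability space, let (α_k)_{k≥1} be a positive sequence with Σ_{k} α_k = ∞ and Σ_{k} α_k² < ∞, let L > 0, let the initial iterate x₁ ∈ ℝ^N be a constant multiple of the all-ones vector, and let (X_k), (G_k) be random vectors in ℝ^N with X₁ = x₁ almost surely, E[‖G_k‖] ≤ L for all k, and X_{k+1} = Π·X_k − α_k·G_k. Let S_k := (1/N)·Σ_{j=1}^{N} X_k^j. Then for every agent j, lim_{k→∞} E[|X_k^j − S_k|] = 0. -/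
open MeasureTheory Filter
open scoped RealInnerProductSpace BigOperators

/-- The eigenvalues of a hermitian (real symmetric) matrix, sorted in increasing order;
`eigAsc A hA ⟨N-1,_⟩` is the largest eigenvalue `λ₁`, `eigAsc A hA ⟨N-2,_⟩` is the second
largest `λ₂`, and `eigAsc A hA ⟨0,_⟩` is the smallest eigenvalue `λ_N`. -/
noncomputable def eigAsc {N : ℕ} (A : Matrix (Fin N) (Fin N) ℝ) (hA : A.IsHermitian) :
    Fin N → ℝ :=
  hA.eigenvalues ∘ Tuple.sort hA.eigenvalues

/-!
Row and column sums equal to one make the mixing matrix commute with the projection onto the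
disagreement vectors, those whose coordinates sum to zero. The spectral gap makes it a contraction
there, with ratio `λ₂ < 1`, so the expected disagreement `a k` satisfies
`a (k + 1) ≤ λ₂ * a k + O(α k)`, and such a sequence tends to zero as soon as `α k → 0`.
-/

section ScalarSequences

theorem tendsto_zero_of_le_mul_add {a b : ℕ → ℝ} {ρ : ℝ} (hρ₀ : 0 ≤ ρ) (hρ₁ : ρ < 1)
    (ha : ∀ k, 0 ≤ a k) (hb : Tendsto b atTop (nhds 0))
    (hrec : ∀ᶠ k in atTop, a (k + 1) ≤ ρ * a k + b k) :
    Tendsto a atTop (nhds 0) := by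
  refine tendsto_order.2 ⟨fun _ hε => .of_forall fun k => hε.trans_le (ha k), fun ε hε => ?_⟩
  have hthreshold : 0 < (1 - ρ) * (ε / 2) := mul_pos (sub_pos.2 hρ₁) (half_pos hε)
  obtain ⟨K, hK⟩ := eventually_atTop.1 (hrec.and (hb.eventually_le_const hthreshold))
  -- `ε / 2` is the fixed point of `t ↦ ρ * t + (1 - ρ) * (ε / 2)`.
  have hexcess (n : ℕ) : a (n + K) - ε / 2 ≤ ρ ^ n * (a K - ε / 2) := by
    have hgeom := le_geom (u := fun n => a (n + K) - ε / 2) hρ₀ n fun k _ => by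
      obtain ⟨hstep, hsmall⟩ := hK (k + K) (Nat.le_add_left K k)
      rw [Nat.add_right_comm]
      linarith
    simpa only [Nat.zero_add] using hgeom
  have hdecay : Tendsto (fun n => ρ ^ n * (a K - ε / 2)) atTop (nhds 0) := by
    simpa only [zero_mul] using
      (tendsto_pow_atTop_nhds_zero_of_lt_one hρ₀ hρ₁).mul_const (a K - ε / 2)
  rw [← map_add_atTop_eq_nat K, eventually_map]
  filter_upwards [hdecay.eventually_lt_const (half_pos hε)] with n hn
  linarith [hexcess n]

theorem tendsto_zero_of_summable_sq {α : ℕ → ℝ} (hα : Summable fun k => α k ^ 2) :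
    Tendsto α atTop (nhds 0) := by
  have hsqrt := hα.tendsto_atTop_zero.sqrt
  simp only [Real.sqrt_sq_eq_abs, Real.sqrt_zero] at hsqrt
  exact (tendsto_zero_iff_abs_tendsto_zero α).2 hsqrt

end ScalarSequences

section PerturbedLinearIteration

variable {Ω E F : Type*} {mΩ : MeasurableSpace Ω} {μ : Measure Ω}
  [NormedAddCommGroup E] [NormedSpace ℝ E] [NormedAddCommGroup F] [NormedSpace ℝ F]
  {T : E →L[ℝ] E} {X ξ : ℕ → Ω → E} {n₀ : ℕ}

theorem integrable_of_succ_ae_eq_map_add (hX : Integrable (X n₀) μ)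
    (hξ : ∀ k, n₀ ≤ k → Integrable (ξ k) μ)
    (hrec : ∀ k, n₀ ≤ k → ∀ᵐ ω ∂μ, X (k + 1) ω = T (X k ω) + ξ k ω) {k : ℕ} (hk : n₀ ≤ k) :
    Integrable (X k) μ := by
  induction k, hk using Nat.le_induction with
  | base => exact hX
  | succ k hk ih =>
    exact ((T.integrable_comp ih).add (hξ k hk)).congr (EventuallyEq.symm (hrec k hk))

theorem integral_norm_succ_le {P : E →L[ℝ] F} {ρ : ℝ}
    (hcontr : ∀ x, ‖P (T x)‖ ≤ ρ * ‖P x‖) {k : ℕ} (hX : Integrable (X k) μ)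
    (hξ : Integrable (ξ k) μ) (hrec : ∀ᵐ ω ∂μ, X (k + 1) ω = T (X k ω) + ξ k ω) :
    ∫ ω, ‖P (X (k + 1) ω)‖ ∂μ ≤ ρ * ∫ ω, ‖P (X k ω)‖ ∂μ + ‖P‖ * ∫ ω, ‖ξ k ω‖ ∂μ := by
  have hX' : Integrable (fun ω => ρ * ‖P (X k ω)‖) μ := (P.integrable_comp hX).norm.const_mul ρ
  have hξ' : Integrable (fun ω => ‖P‖ * ‖ξ k ω‖) μ := hξ.norm.const_mul ‖P‖
  have hpointwise : ∀ᵐ ω ∂μ, ‖P (X (k + 1) ω)‖ ≤ ρ * ‖P (X k ω)‖ + ‖P‖ * ‖ξ k ω‖ := by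
    filter_upwards [hrec] with ω hω
    rw [hω, map_add]
    exact norm_add_le_of_le (hcontr _) (P.le_opNorm _)
  calc ∫ ω, ‖P (X (k + 1) ω)‖ ∂μ
      ≤ ∫ ω, (ρ * ‖P (X k ω)‖ + ‖P‖ * ‖ξ k ω‖) ∂μ :=
        integral_mono_of_nonneg (.of_forall fun _ => norm_nonneg _) (hX'.add hξ') hpointwise
    _ = ρ * ∫ ω, ‖P (X k ω)‖ ∂μ + ‖P‖ * ∫ ω, ‖ξ k ω‖ ∂μ := by
        rw [integral_add hX' hξ', integral_const_mul, integral_const_mul]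

theorem tendsto_integral_norm_of_contraction {P : E →L[ℝ] F} {ρ : ℝ} (hρ₀ : 0 ≤ ρ) (hρ₁ : ρ < 1)
    (hcontr : ∀ x, ‖P (T x)‖ ≤ ρ * ‖P x‖)
    (hX : Integrable (X n₀) μ) (hξ : ∀ k, n₀ ≤ k → Integrable (ξ k) μ)
    (hξ₀ : Tendsto (fun k => ∫ ω, ‖ξ k ω‖ ∂μ) atTop (nhds 0))
    (hrec : ∀ k, n₀ ≤ k → ∀ᵐ ω ∂μ, X (k + 1) ω = T (X k ω) + ξ k ω) :
    Tendsto (fun k => ∫ ω, ‖P (X k ω)‖ ∂μ) atTop (nhds 0) := by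
  refine tendsto_zero_of_le_mul_add (b := fun k => ‖P‖ * ∫ ω, ‖ξ k ω‖ ∂μ) hρ₀ hρ₁
    (fun k => integral_nonneg fun _ => norm_nonneg _)
    (by simpa only [mul_zero] using hξ₀.const_mul ‖P‖) ?_
  filter_upwards [eventually_ge_atTop n₀] with k hk
  exact integral_norm_succ_le hcontr (integrable_of_succ_ae_eq_map_add hX hξ hrec hk) (hξ k hk)
    (hrec k hk)

theorem tendsto_integral_norm_smul_of_le {α : ℕ → ℝ} {L : ℝ} (hα : Tendsto α atTop (nhds 0))
    (hξ : ∀ k, n₀ ≤ k → ∫ ω, ‖ξ k ω‖ ∂μ ≤ L) :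
    Tendsto (fun k => ∫ ω, ‖α k • ξ k ω‖ ∂μ) atTop (nhds 0) := by
  refine squeeze_zero' (.of_forall fun k => integral_nonneg fun _ => norm_nonneg _) ?_
    (by simpa only [abs_zero, zero_mul] using hα.abs.mul_const L)
  filter_upwards [eventually_ge_atTop n₀] with k hk
  simp only [norm_smul, integral_const_mul, Real.norm_eq_abs]
  exact mul_le_mul_of_nonneg_left (hξ k hk) (abs_nonneg _)

end PerturbedLinearIteration

section Eigenbasis

open scoped InnerProductSpace

variable {ι 𝕜 E : Type*} [Fintype ι] [RCLike 𝕜] [NormedAddCommGroup E] [InnerProductSpace 𝕜 E]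
  {b : OrthonormalBasis ι 𝕜 E} {T : E →ₗ[𝕜] E} {eig : ι → 𝕜}

theorem inner_eigenbasis_map (hb : ∀ i, T (b i) = eig i • b i) (i : ι) (x : E) :
    ⟪b i, T x⟫_𝕜 = eig i * ⟪b i, x⟫_𝕜 := by
  classical
  conv_lhs => rw [← b.sum_repr' x]
  simp only [map_sum, map_smul, hb, inner_sum, inner_smul_right, b.inner_eq_ite, mul_ite, mul_one,
    mul_zero, Finset.sum_ite_eq, Finset.mem_univ, if_true]
  exact mul_comm _ _

theorem inner_eigenbasis_eq_zero_of_ne (hb : ∀ i, T (b i) = eig i • b i) {c : 𝕜} {v : E}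
    (hv : T v = c • v) {i : ι} (hi : eig i ≠ c) : ⟪b i, v⟫_𝕜 = 0 := by
  have h := inner_eigenbasis_map hb i v
  rw [hv, inner_smul_right] at h
  exact (mul_eq_mul_right_iff.1 h).resolve_left hi.symm

theorem norm_map_le_of_norm_eigenvalue_le (hb : ∀ i, T (b i) = eig i • b i) {ρ : ℝ} (hρ : 0 ≤ ρ)
    {x : E} (hx : ∀ i, ⟪b i, x⟫_𝕜 ≠ 0 → ‖eig i‖ ≤ ρ) : ‖T x‖ ≤ ρ * ‖x‖ := by
  refine le_of_sq_le_sq ?_ (mul_nonneg hρ (norm_nonneg x))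
  have hcoord (i : ι) : ‖⟪b i, T x⟫_𝕜‖ ≤ ρ * ‖⟪b i, x⟫_𝕜‖ := by
    rw [inner_eigenbasis_map hb, norm_mul]
    rcases eq_or_ne ⟪b i, x⟫_𝕜 0 with h0 | h0
    · simp only [h0, norm_zero, mul_zero, le_refl]
    · exact mul_le_mul_of_nonneg_right (hx i h0) (norm_nonneg _)
  calc ‖T x‖ ^ 2 = ∑ i, ‖⟪b i, T x⟫_𝕜‖ ^ 2 := (b.sum_sq_norm_inner_right _).symm
    _ ≤ ∑ i, (ρ * ‖⟪b i, x⟫_𝕜‖) ^ 2 := by gcongr with i; exact hcoord i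
    _ = (ρ * ‖x‖) ^ 2 := by
        simp only [mul_pow, ← Finset.mul_sum, b.sum_sq_norm_inner_right]

theorem norm_map_le_of_inner_eigenvector_eq_zero (hb : ∀ i, T (b i) = eig i • b i) {c : 𝕜} {v : E}
    (hv₀ : v ≠ 0) (hv : T v = c • v) {i₀ : ι} {ρ : ℝ} (hρ : 0 ≤ ρ)
    (heig : ∀ i, i ≠ i₀ → eig i ≠ c ∧ ‖eig i‖ ≤ ρ) {x : E} (hx : ⟪v, x⟫_𝕜 = 0) :
    ‖T x‖ ≤ ρ * ‖x‖ := by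
  refine norm_map_le_of_norm_eigenvalue_le hb hρ fun i hi => (heig i ?_).2
  rintro rfl
  have hv_span : ⟪b i, v⟫_𝕜 • b i = v := by
    rw [← Fintype.sum_eq_single (f := fun j => ⟪b j, v⟫_𝕜 • b j) i fun j hj => ?_, b.sum_repr']
    rw [inner_eigenbasis_eq_zero_of_ne hb hv (heig j hj).1, zero_smul]
  rw [← hv_span, inner_smul_left, mul_eq_zero, map_eq_zero] at hx
  refine hx.elim (fun h => hv₀ ?_) hi
  rw [← hv_span, h, zero_smul]

end Eigenbasis

section SecondEigenvalue

theorem toEuclideanLin_eigenvectorBasis {n 𝕜 : Type*} [Fintype n] [DecidableEq n] [RCLike 𝕜]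
    {A : Matrix n n 𝕜} (hA : A.IsHermitian) (i : n) :
    Matrix.toEuclideanLin A (hA.eigenvectorBasis i) =
      (hA.eigenvalues i : 𝕜) • hA.eigenvectorBasis i := by
  ext j
  simpa [RCLike.real_smul_eq_coe_mul] using congrFun (hA.mulVec_eigenvectorBasis i) j

variable {N : ℕ} {A : Matrix (Fin N) (Fin N) ℝ}

theorem exists_forall_ne_eigenvalues_le_eigAsc (hA : A.IsHermitian) (hN : 0 < N) :
    ∃ i₀, ∀ i, i ≠ i₀ → hA.eigenvalues i ≤ eigAsc A hA ⟨N - 2, by omega⟩ := by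
  refine ⟨Tuple.sort hA.eigenvalues ⟨N - 1, by omega⟩, fun i hi => ?_⟩
  obtain ⟨j, rfl⟩ := (Tuple.sort hA.eigenvalues).surjective i
  have hj : j ≠ ⟨N - 1, by omega⟩ := fun h => hi (congrArg _ h)
  have hj_le : j ≤ ⟨N - 2, by omega⟩ := by
    simp only [ne_eq, Fin.ext_iff, Fin.le_def] at hj ⊢
    omega
  exact Tuple.monotone_sort hA.eigenvalues hj_le

end SecondEigenvalue

section Consensus

open Matrix

variable {ι : Type*} [Fintype ι]

/-- The linear map `x ↦ x - x̄ 𝟙` taking a vector of agent values to its deviation from the network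
average `x̄`; consensus means that its value tends to zero. -/
noncomputable def disagreement (ι : Type*) [Fintype ι] :
    EuclideanSpace ℝ ι →L[ℝ] EuclideanSpace ℝ ι :=
  ContinuousLinearMap.id ℝ _ -
    ((1 / (Fintype.card ι : ℝ)) • innerSL ℝ (WithLp.toLp 2 1)).smulRight (WithLp.toLp 2 1)

theorem inner_toLp_one (x : EuclideanSpace ℝ ι) : ⟪WithLp.toLp 2 1, x⟫ = ∑ i, x i := by
  simp [PiLp.inner_apply]

theorem disagreement_eq_sub_smul (x : EuclideanSpace ℝ ι) :
    disagreement ι x = x - (1 / (Fintype.card ι : ℝ) * ∑ i, x i) • WithLp.toLp 2 1 := by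
  simp [disagreement, inner_toLp_one]

theorem disagreement_apply (x : EuclideanSpace ℝ ι) (j : ι) :
    disagreement ι x j = x j - 1 / (Fintype.card ι : ℝ) * ∑ i, x i := by
  simp [disagreement_eq_sub_smul]

theorem sum_disagreement (x : EuclideanSpace ℝ ι) : ∑ j, disagreement ι x j = 0 := by
  rcases isEmpty_or_nonempty ι with _ | _
  · exact Fintype.sum_empty _
  · simp [disagreement_apply]

variable {W : Matrix ι ι ℝ}

theorem one_vecMul_eq_one_of_isHermitian (hW : W.IsHermitian) (hrow : W *ᵥ 1 = 1) :
    1 ᵥ* W = 1 := by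
  rw [← hW.eq, conjTranspose_eq_transpose_of_trivial, vecMul_transpose, hrow]

variable [DecidableEq ι]

theorem toEuclideanLin_toLp_one (hrow : W *ᵥ 1 = 1) :
    toEuclideanLin W (WithLp.toLp 2 1) = WithLp.toLp 2 1 := by
  rw [toLpLin_toLp, toLin'_apply, hrow]

theorem sum_toEuclideanLin (hcol : 1 ᵥ* W = 1) (x : EuclideanSpace ℝ ι) :
    ∑ i, toEuclideanLin W x i = ∑ i, x i := by
  calc ∑ i, toEuclideanLin W x i = 1 ⬝ᵥ W *ᵥ x.ofLp := (one_dotProduct _).symm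
    _ = ∑ i, x i := by rw [dotProduct_mulVec, hcol, one_dotProduct]

theorem disagreement_toEuclideanLin (hrow : W *ᵥ 1 = 1) (hcol : 1 ᵥ* W = 1)
    (x : EuclideanSpace ℝ ι) :
    disagreement ι (toEuclideanLin W x) = toEuclideanLin W (disagreement ι x) := by
  rw [disagreement_eq_sub_smul, disagreement_eq_sub_smul, sum_toEuclideanLin hcol, map_sub,
    map_smul, toEuclideanLin_toLp_one hrow]

theorem norm_toEuclideanLin_le_eigAsc_mul_norm {N : ℕ} {A : Matrix (Fin N) (Fin N) ℝ}
    (hA : A.PosSemidef) (hrow : A *ᵥ 1 = 1) (hN : 0 < N)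
    (hgap : eigAsc A hA.isHermitian ⟨N - 2, by omega⟩ < 1) {x : EuclideanSpace ℝ (Fin N)}
    (hx : ∑ i, x i = 0) :
    ‖toEuclideanLin A x‖ ≤ eigAsc A hA.isHermitian ⟨N - 2, by omega⟩ * ‖x‖ := by
  have hone : (WithLp.toLp 2 1 : EuclideanSpace ℝ (Fin N)) ≠ 0 := fun h => by
    simpa using congrFun (congrArg WithLp.ofLp h) ⟨0, hN⟩
  have hfixed : toEuclideanLin A (WithLp.toLp 2 1) = (1 : ℝ) • WithLp.toLp 2 1 := by
    rw [toEuclideanLin_toLp_one hrow, one_smul]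
  obtain ⟨i₀, hi₀⟩ := exists_forall_ne_eigenvalues_le_eigAsc hA.isHermitian hN
  refine norm_map_le_of_inner_eigenvector_eq_zero (toEuclideanLin_eigenvectorBasis hA.isHermitian)
    hone hfixed (hA.eigenvalues_nonneg _) (fun i hi => ⟨((hi₀ i hi).trans_lt hgap).ne, ?_⟩)
    ((inner_toLp_one x).trans hx)
  rw [RCLike.ofReal_real_eq_id, id, Real.norm_of_nonneg (hA.eigenvalues_nonneg i)]
  exact hi₀ i hi

theorem cdsgd_consensus_diminishing_step_general {Ω : Type*} {mΩ : MeasurableSpace Ω}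
    {μ : Measure Ω} (hrow : W *ᵥ 1 = 1) (hcol : 1 ᵥ* W = 1) {ρ : ℝ} (hρ₀ : 0 ≤ ρ) (hρ₁ : ρ < 1)
    (hcontr : ∀ x : EuclideanSpace ℝ ι, ∑ i, x i = 0 → ‖toEuclideanLin W x‖ ≤ ρ * ‖x‖)
    {α : ℕ → ℝ} (hα : Tendsto α atTop (nhds 0)) {L : ℝ} {X G : ℕ → Ω → EuclideanSpace ℝ ι}
    (hX : Integrable (X 1) μ) (hG : ∀ k, 1 ≤ k → Integrable (G k) μ)
    (hGbound : ∀ k, 1 ≤ k → ∫ ω, ‖G k ω‖ ∂μ ≤ L)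
    (hupdate : ∀ k, 1 ≤ k → ∀ᵐ ω ∂μ, X (k + 1) ω = toEuclideanLin W (X k ω) - α k • G k ω)
    (j : ι) :
    Tendsto (fun k => ∫ ω, |X k ω j - 1 / (Fintype.card ι : ℝ) * ∑ i, X k ω i| ∂μ)
      atTop (nhds 0) := by
  let T := (toEuclideanLin W).toContinuousLinearMap
  have hT (x : EuclideanSpace ℝ ι) : ‖disagreement ι (T x)‖ ≤ ρ * ‖disagreement ι x‖ :=
    (congrArg norm (disagreement_toEuclideanLin hrow hcol x)).trans_le
      (hcontr _ (sum_disagreement x))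
  have hnoise (k : ℕ) (hk : 1 ≤ k) : Integrable (fun ω => -(α k • G k ω)) μ :=
    ((hG k hk).smul (α k)).neg
  have hnoise₀ : Tendsto (fun k => ∫ ω, ‖-(α k • G k ω)‖ ∂μ) atTop (nhds 0) := by
    simpa only [norm_neg] using tendsto_integral_norm_smul_of_le hα hGbound
  have hrec (k : ℕ) (hk : 1 ≤ k) : ∀ᵐ ω ∂μ, X (k + 1) ω = T (X k ω) + -(α k • G k ω) :=
    (hupdate k hk).mono fun _ hω => hω.trans (sub_eq_add_neg _ _)
  refine squeeze_zero' (.of_forall fun k => integral_nonneg fun _ => abs_nonneg _) ?_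
    (tendsto_integral_norm_of_contraction hρ₀ hρ₁ hT hX hnoise hnoise₀ hrec)
  filter_upwards [eventually_ge_atTop 1] with k hk
  have hXk : Integrable (X k) μ := integrable_of_succ_ae_eq_map_add hX hnoise hrec hk
  refine integral_mono_of_nonneg (.of_forall fun _ => abs_nonneg _)
    ((disagreement ι).integrable_comp hXk).norm (.of_forall fun ω => ?_)
  simp only [← disagreement_apply]
  exact PiLp.norm_apply_le (disagreement ι (X k ω)) j

end Consensus

/-- Proposition 2 (consensus with diminishing step size): along the CDSGD iterates
`X_{k+1} = Π·X_k − α_k·G_k` with `E[‖G_k‖] ≤ L`, diminishing steps (`Σα_k = ∞`, `Σα_k² < ∞`)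
and identical initialization, `E[|X_k^j − S_k|] → 0` for every agent `j`. -/
theorem cdsgd_consensus_diminishing_step {N : ℕ} (hN : 2 ≤ N) {Ω : Type*}
    {m0 : MeasurableSpace Ω} (P : Measure Ω) [IsProbabilityMeasure P]
    (Pi : Matrix (Fin N) (Fin N) ℝ) (hsymm : Pi.IsHermitian)
    (hnonneg : ∀ i j, 0 ≤ Pi i j)
    (hstoch : Pi.mulVec (fun _ => 1) = fun _ => 1)
    (hpsd : (1 - Pi).PosSemidef) (hpd : Pi.PosDef)
    (hlam1 : eigAsc Pi hsymm ⟨N - 1, by omega⟩ = 1)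
    (hlam2 : eigAsc Pi hsymm ⟨N - 2, by omega⟩ < 1)
    (hlamN : 0 < eigAsc Pi hsymm ⟨0, by omega⟩)
    (α : ℕ → ℝ) (hαpos : ∀ k, 1 ≤ k → 0 < α k)
    (hαdiv : ¬ Summable (fun k => α k))
    (hαsq : Summable (fun k => (α k) ^ 2))
    (L : ℝ) (hL : 0 < L)
    (c : ℝ) (x₁ : EuclideanSpace ℝ (Fin N)) (hx₁ : ∀ j, x₁ j = c)
    (X G : ℕ → Ω → EuclideanSpace ℝ (Fin N))
    (hX1 : ∀ᵐ ω ∂P, X 1 ω = x₁)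
    (hGmeas : ∀ k, AEStronglyMeasurable (G k) P)
    (hGint : ∀ k, Integrable (fun ω => ‖G k ω‖) P)
    (hGbound : ∀ k, (∫ ω, ‖G k ω‖ ∂P) ≤ L)
    (hupdate : ∀ k, 1 ≤ k → ∀ ω,
      X (k + 1) ω = (Matrix.toEuclideanLin Pi) (X k ω) - α k • G k ω) :
    ∀ j : Fin N,
      Tendsto (fun k : ℕ => ∫ ω, |X k ω j - (1 / (N : ℝ)) * ∑ i, X k ω i| ∂P)
        atTop (nhds 0) := by
  simpa only [Fintype.card_fin] using cdsgd_consensus_diminishing_step_general hstoch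
    (one_vecMul_eq_one_of_isHermitian hsymm hstoch) (hpd.posSemidef.eigenvalues_nonneg _) hlam2
    (fun _ => norm_toEuclideanLin_le_eigAsc_mul_norm hpd.posSemidef hstoch (by omega) hlam2)
    (tendsto_zero_of_summable_sq hαsq) ((integrable_const x₁).congr (EventuallyEq.symm hX1))
    (fun k _ => (integrable_norm_iff (hGmeas k)).1 (hGint k)) (fun k _ => hGbound k)
    (fun k hk => .of_forall (hupdate k hk))
end
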